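/- There exists a constant C > 0 depending only on n such that, for every abstract Monge–Ampère pairing setup (W, B, 𝟙, F) as in the context together with a positivity cone W₊ and a constant D ≥ 0 as in the context, and all ψ, φ₁, φ₂ ∈ F satisfying φ_ref − ψ ∈ W₊, φ_ref − φ₁ ∈ W₊ and φ_ref − φ₂ ∈ W₊ (sup-normalization): |B(ψ − φ_ref, φ₁, …, φ₁) − B(ψ − φ_ref, φ₂, …, φ₂)| ≤ C · I(φ₁, φ₂)^{1/2} · (D + max{J(ψ), J(φ₁), J(φ₂)})^{1/2}, where φᵢ fills the last n slots of B (i.e., |∫(ψ−φ_ref) MA(φ₁) − ∫(ψ−φ_ref) MA(φ₂)| is so bounded). -/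

import Mathlib

open Finset

/-- Abstract Monge–Ampère pairing setup with `n = m + 1`: a symmetric multilinear
form `B` on `W^(n+1) = W^(m+2)`, a unit element `one`, and a nonempty convex set
`F ⊆ W`, satisfying (i) normalization `B(𝟙, φ₁, …, φₙ) = 1`, (ii) integration by
parts `B(u, 𝟙, g₂, …, gₙ) = 0` for `u ∈ W₀` and `gᵢ ∈ W' = span (F ∪ {𝟙})`, and
(iii) the Cauchy–Schwarz / local Hodge index inequality
`B(u, u, φ₁, …, φ_{n-1}) ≤ 0` for `u ∈ W₀`. -/
structure MASetup (m : ℕ) (W : Type*) [AddCommGroup W] [Module ℝ W] where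
  B : MultilinearMap ℝ (fun _ : Fin (m + 2) => W) ℝ
  symm : ∀ (v : Fin (m + 2) → W) (σ : Equiv.Perm (Fin (m + 2))), B (v ∘ σ) = B v
  one : W
  F : Set W
  Fne : F.Nonempty
  Fconv : Convex ℝ F
  unital : ∀ g : Fin (m + 1) → W, (∀ i, g i ∈ F) → B (Fin.cons one g) = 1
  parts : ∀ u ∈ Submodule.span ℝ ({x | ∃ φ ∈ F, ∃ ψ ∈ F, x = φ - ψ} ∪ {one}),
      ∀ g : Fin m → W, (∀ i, g i ∈ Submodule.span ℝ (F ∪ {one})) →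
        B (Fin.cons u (Fin.cons one g)) = 0
  hodge : ∀ u ∈ Submodule.span ℝ ({x | ∃ φ ∈ F, ∃ ψ ∈ F, x = φ - ψ} ∪ {one}),
      ∀ g : Fin m → W, (∀ i, g i ∈ F) → B (Fin.cons u (Fin.cons u g)) ≤ 0

namespace MASetup

variable {m : ℕ} {W : Type*} [AddCommGroup W] [Module ℝ W]

/-- The vector with `j` copies of `φ` followed by copies of `ψ`. -/
def mixVec (φ ψ : W) (j : ℕ) {k : ℕ} : Fin k → W := fun i => if (i : ℕ) < j then φ else ψ

/-- The linear span `W₀` of the differences of elements of `F` together with `one`. -/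
def W0 (S : MASetup m W) : Submodule ℝ W :=
  Submodule.span ℝ ({x | ∃ φ ∈ S.F, ∃ ψ ∈ S.F, x = φ - ψ} ∪ {S.one})

/-- The Monge–Ampère energy
`E(φ, ψ) = (n+1)⁻¹ ∑_{j=0}^{n} B(φ-ψ, φ, …, φ, ψ, …, ψ)` with `j` copies of `φ`
and `n - j` copies of `ψ` among the last `n` arguments. -/
noncomputable def energy (S : MASetup m W) (φ ψ : W) : ℝ :=
  ((m : ℝ) + 2)⁻¹ * ∑ j ∈ Finset.range (m + 2), S.B (Fin.cons (φ - ψ) (mixVec φ ψ j))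

/-- The functional `I(φ, ψ) = B(φ-ψ, ψ, …, ψ) - B(φ-ψ, φ, …, φ)`. -/
noncomputable def Ifun (S : MASetup m W) (φ ψ : W) : ℝ :=
  S.B (Fin.cons (φ - ψ) fun _ => ψ) - S.B (Fin.cons (φ - ψ) fun _ => φ)

/-- The functional `J_ψ(φ) = B(φ-ψ, ψ, …, ψ) - E(φ, ψ)`. -/
noncomputable def Jfun (S : MASetup m W) (ψ φ : W) : ℝ :=
  S.B (Fin.cons (φ - ψ) fun _ => ψ) - S.energy φ ψ

end MASetup

/-!
The form `(u, v) ↦ -B(u, v, g)` is positive semidefinite on differences of potentials, so it obeys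
the Cauchy–Schwarz inequality. The difference of the two integrals telescopes into the `n` terms
`-B(ψ - φ_ref, φ₁ - φ₂, φ₁, …, φ₁, φ₂, …, φ₂)`. The squared seminorms of `φ₁ - φ₂` for the same `g`
add up to `I(φ₁, φ₂)`. Since `φ_ref - ψ` is nonnegative, the squared seminorm of `ψ - φ_ref` is at
most `B(φ_ref - ψ, ψ, φ₁, …, φ₁, φ₂, …, φ₂)`. This is one of the terms, all of them nonnegative, in
the expansion of `3^(n+1) B(φ_ref - φ, φ, …, φ)` at the barycenter `φ = (ψ + φ₁ + φ₂) / 3`. The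
latter pairing is at most `I(φ, φ_ref) + D ≤ (n + 1) J(φ) + D`, and `J` is convex because
telescoping turns `J ≥ 0` into a subgradient inequality.
-/

open MASetup (mixVec)

section LinearAlgebra

variable {R M N : Type*} [CommRing R] [AddCommGroup M] [Module R M] [AddCommGroup N] [Module R N]

theorem convexOn_of_exists_subgradient [PartialOrder R] [IsOrderedRing R] {s : Set M} {f : M → R}
    (hs : Convex R s) (h : ∀ z ∈ s, ∃ ℓ : M →ₗ[R] R, ∀ x ∈ s, f z + ℓ (x - z) ≤ f x) :
    ConvexOn R s f := by
  refine ⟨hs, fun x hx y hy a b ha hb hab => ?_⟩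
  obtain ⟨ℓ, hℓ⟩ := h _ (hs hx hy ha hb hab)
  set z := a • x + b • y with hz
  have hcancel : a * ℓ (x - z) + b * ℓ (y - z) = 0 := by
    have hvec : a • (x - z) + b • (y - z) = 0 := by
      rw [smul_sub, smul_sub, sub_add_sub_comm, ← add_smul, hab, one_smul, hz, sub_self]
    simpa only [map_add, map_smul, smul_eq_mul, map_zero] using congrArg ℓ hvec
  calc f z = a * (f z + ℓ (x - z)) + b * (f z + ℓ (y - z)) := by
        linear_combination (-f z) * hab - hcancel
    _ ≤ a • f x + b • f y :=
        add_le_add (mul_le_mul_of_nonneg_left (hℓ x hx) ha)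
          (mul_le_mul_of_nonneg_left (hℓ y hy) hb)

theorem prod_mul_apply_le_apply_sum_smul [PartialOrder R] [IsOrderedRing R] {ι κ : Type*}
    [Fintype ι] [Fintype κ] (f : MultilinearMap R (fun _ : ι => M) R) {w : κ → R}
    (hw : ∀ k, 0 ≤ w k) {G : ι → κ → M} (hG : ∀ r : ι → κ, 0 ≤ f fun i => G i (r i))
    (r : ι → κ) :
    (∏ i, w (r i)) * f (fun i => G i (r i)) ≤ f fun i => ∑ k, w k • G i k := by
  classical
  simp only [f.map_sum, f.map_smul_univ, smul_eq_mul]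
  exact single_le_sum (f := fun r : ι → κ => (∏ i, w (r i)) * f fun i => G i (r i))
    (fun r _ => mul_nonneg (prod_nonneg fun i _ => hw (r i)) (hG r)) (mem_univ r)

/-- The linear map `u ↦ f(u, g₁, …, gₖ)`. -/
def headLinear {k : ℕ} (f : MultilinearMap R (fun _ : Fin (k + 1) => M) N) (g : Fin k → M) :
    M →ₗ[R] N where
  toFun u := f (Fin.cons u g)
  map_add' := f.cons_add g
  map_smul' := f.cons_smul g

theorem headLinear_apply {k : ℕ} (f : MultilinearMap R (fun _ : Fin (k + 1) => M) N)
    (g : Fin k → M) (u : M) : headLinear f g u = f (Fin.cons u g) :=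
  rfl

theorem apply_cons_sub {k : ℕ} (f : MultilinearMap R (fun _ : Fin (k + 1) => M) N) (u v : M)
    (g : Fin k → M) : f (Fin.cons (u - v) g) = f (Fin.cons u g) - f (Fin.cons v g) :=
  (headLinear f g).map_sub u v

/-- A symmetric multilinear map: one that is invariant under permutations of its arguments. -/
def IsSymmForm {k : ℕ} (f : MultilinearMap R (fun _ : Fin k => M) N) : Prop :=
  ∀ (v : Fin k → M) (σ : Equiv.Perm (Fin k)), f (v ∘ σ) = f v

theorem IsSymmForm.curryLeft {k : ℕ} {f : MultilinearMap R (fun _ : Fin (k + 1) => M) N}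
    (hf : IsSymmForm f) (u : M) : IsSymmForm (f.curryLeft u) := by
  intro v σ
  have hcons : (Fin.cons u v : Fin (k + 1) → M) ∘ Equiv.Perm.decomposeFin.symm (0, σ)
      = Fin.cons u (v ∘ σ) := by
    funext i
    cases i using Fin.cases <;> simp
  rw [MultilinearMap.curryLeft_apply, MultilinearMap.curryLeft_apply, ← hcons, hf]

theorem IsSymmForm.apply_cons_cons_comm {k : ℕ}
    {f : MultilinearMap R (fun _ : Fin (k + 2) => M) N} (hf : IsSymmForm f) (u v : M)
    (g : Fin k → M) : f (Fin.cons u (Fin.cons v g)) = f (Fin.cons v (Fin.cons u g)) := by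
  rw [← hf _ (Equiv.swap 0 1)]
  exact congrArg f (Matrix.cons_cons_comp_swap_zero_one u v g)

end LinearAlgebra

section MixedVectors

variable {α : Type*}

theorem mixVec_mem {s : Set α} {φ ψ : α} (hφ : φ ∈ s) (hψ : ψ ∈ s) (j : ℕ) {k : ℕ} (i : Fin k) :
    mixVec φ ψ j i ∈ s := by
  unfold mixVec
  split_ifs <;> assumption

theorem comp_mixVec {β : Type*} (f : α → β) (φ ψ : α) (j k : ℕ) :
    f ∘ (mixVec φ ψ j : Fin k → α) = mixVec (f φ) (f ψ) j :=
  funext fun _ => apply_ite f _ _ _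

theorem mixVec_zero (φ ψ : α) (k : ℕ) : (mixVec φ ψ 0 : Fin k → α) = fun _ => ψ := by
  funext i
  simp [mixVec]

theorem mixVec_self (φ ψ : α) (k : ℕ) : (mixVec φ ψ k : Fin k → α) = fun _ => φ := by
  funext i
  simp [mixVec]

theorem mixVec_succ (φ ψ : α) (j k : ℕ) :
    (mixVec φ ψ (j + 1) : Fin (k + 1) → α) = Fin.cons φ (mixVec φ ψ j) := by
  funext i
  cases i using Fin.cases <;> simp [mixVec]

theorem insertNth_mixVec (φ ψ : α) {j k : ℕ} (hj : j < k + 1) :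
    Fin.insertNth (⟨j, hj⟩ : Fin (k + 1)) ψ (mixVec φ ψ j) = (mixVec φ ψ j : Fin (k + 1) → α) := by
  refine Fin.insertNth_eq_iff.2 ⟨by simp [mixVec], funext fun i => ?_⟩
  have hval : ((Fin.succAbove ⟨j, hj⟩ i : Fin (k + 1)) : ℕ) < j ↔ (i : ℕ) < j := by
    simp only [Fin.succAbove, Fin.lt_def, Fin.val_castSucc]
    split_ifs <;> grind
  simp only [mixVec, Fin.removeNth, hval]

variable {R M N : Type*} [CommRing R] [AddCommGroup M] [Module R M] [AddCommGroup N] [Module R N]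
  {k : ℕ} {f : MultilinearMap R (fun _ : Fin (k + 1) => M) N}

theorem IsSymmForm.apply_cons_mixVec (hf : IsSymmForm f) (φ ψ : M) {j : ℕ} (hj : j < k + 1) :
    f (Fin.cons ψ (mixVec φ ψ j)) = f (mixVec φ ψ j) := by
  rw [← hf _ (Fin.cycleRange ⟨j, hj⟩), Fin.cons_comp_cycleRange, insertNth_mixVec]

theorem IsSymmForm.apply_cons_sub_mixVec (hf : IsSymmForm f) (φ ψ : M) {j : ℕ} (hj : j < k + 1) :
    f (Fin.cons (φ - ψ) (mixVec φ ψ j)) = f (mixVec φ ψ (j + 1)) - f (mixVec φ ψ j) := by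
  rw [apply_cons_sub, mixVec_succ, hf.apply_cons_mixVec φ ψ hj]

theorem IsSymmForm.sum_apply_cons_sub_mixVec (hf : IsSymmForm f) (φ ψ : M) :
    ∑ j ∈ range (k + 1), f (Fin.cons (φ - ψ) (mixVec φ ψ j)) = f (fun _ => φ) - f fun _ => ψ := by
  rw [sum_congr rfl fun j hj => hf.apply_cons_sub_mixVec φ ψ (mem_range.1 hj),
    sum_range_sub fun j => f (mixVec φ ψ j), mixVec_zero, mixVec_self]

end MixedVectors

section Functionals

variable {m : ℕ} {W : Type*} [AddCommGroup W] [Module ℝ W]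

/-- The Monge–Ampère energy `E(φ, ψ)` attached to a form on `W^(n+1)`, with `n = m + 1`. -/
noncomputable def maEnergy (B : MultilinearMap ℝ (fun _ : Fin (m + 2) => W) ℝ) (φ ψ : W) : ℝ :=
  ((m : ℝ) + 2)⁻¹ * ∑ j ∈ range (m + 2), B (Fin.cons (φ - ψ) (mixVec φ ψ j))

/-- Aubin's functional `I(φ, ψ)`, which measures the distance between the potentials `φ`, `ψ`. -/
def aubinI (B : MultilinearMap ℝ (fun _ : Fin (m + 2) => W) ℝ) (φ ψ : W) : ℝ :=
  B (Fin.cons (φ - ψ) fun _ => ψ) - B (Fin.cons (φ - ψ) fun _ => φ)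

/-- Aubin's functional `J_ψ(φ)`, the energy of `φ` relative to `ψ`; the reference potential `ψ` is
the first argument. -/
noncomputable def aubinJ (B : MultilinearMap ℝ (fun _ : Fin (m + 2) => W) ℝ) (ψ φ : W) : ℝ :=
  B (Fin.cons (φ - ψ) fun _ => ψ) - maEnergy B φ ψ

/-- A symmetric form on `W^(n+1)`, `n = m + 1`, satisfies the Hodge index inequality on a set
`F` of potentials if it is negative semidefinite in two arguments on the directions of `F`, the
remaining arguments being in `F`. -/
structure IsHodgeForm (B : MultilinearMap ℝ (fun _ : Fin (m + 2) => W) ℝ) (F : Set W) : Prop where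
  isSymm : IsSymmForm B
  apply_self_nonpos : ∀ u ∈ vectorSpan ℝ F, ∀ g : Fin m → W, (∀ i, g i ∈ F) →
    B (Fin.cons u (Fin.cons u g)) ≤ 0

/-- The bilinear form `(u, v) ↦ -B(u, v, g)`, which on functions on a complex manifold is the
Dirichlet pairing `∫ du ∧ dᶜv ∧ ddᶜg₁ ∧ ⋯`. -/
def dirichletForm (B : MultilinearMap ℝ (fun _ : Fin (m + 2) => W) ℝ) (g : Fin m → W) :
    LinearMap.BilinForm ℝ W :=
  -LinearMap.mk₂ ℝ (fun u v => B (Fin.cons u (Fin.cons v g)))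
    (fun u u' v => B.cons_add (Fin.cons v g) u u') (fun c u v => B.cons_smul (Fin.cons v g) c u)
    (fun u v v' => (B.curryLeft u).cons_add g v v')
    (fun c u v => (B.curryLeft u).cons_smul g c v)

/-- The sup-normalized potentials of `F`. The condition `φ ≤ φref` is encoded by the positivity of
all mixed pairings with `φref - φ`, and `D` bounds the mean of `φref - φ` with respect to the
Monge–Ampère measure of `φref`. -/
def normalizedPotentials (B : MultilinearMap ℝ (fun _ : Fin (m + 2) => W) ℝ) (F : Set W)
    (φref : W) (D : ℝ) : Set W :=
  {φ ∈ F | (∀ g : Fin (m + 1) → W, (∀ i, g i ∈ F) → 0 ≤ B (Fin.cons (φref - φ) g)) ∧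
    B (Fin.cons (φref - φ) fun _ => φref) ≤ D}

variable {B : MultilinearMap ℝ (fun _ : Fin (m + 2) => W) ℝ} {F : Set W}
  {φref φ ψ u v : W} {D : ℝ}

theorem IsSymmForm.maEnergy_eq (hB : IsSymmForm B) (φ ψ : W) :
    maEnergy B φ ψ = ((m : ℝ) + 2)⁻¹ * (B (fun _ => φ) - B fun _ => ψ) := by
  rw [maEnergy, hB.sum_apply_cons_sub_mixVec]

theorem IsSymmForm.aubinJ_sub_aubinJ (hB : IsSymmForm B) (φref φ ψ : W) :
    aubinJ B φref φ - aubinJ B φref ψ = B (Fin.cons (φ - ψ) fun _ => φref) - maEnergy B φ ψ := by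
  simp only [aubinJ, hB.maEnergy_eq, apply_cons_sub]
  ring

theorem dirichletForm_apply (B : MultilinearMap ℝ (fun _ : Fin (m + 2) => W) ℝ) (g : Fin m → W)
    (u v : W) : dirichletForm B g u v = -B (Fin.cons u (Fin.cons v g)) :=
  rfl

theorem IsSymmForm.sum_dirichletForm_mixVec (hB : IsSymmForm B) (u φ ψ : W) :
    ∑ j ∈ range (m + 1), dirichletForm B (mixVec φ ψ j) u (φ - ψ) =
      B (Fin.cons u fun _ => ψ) - B (Fin.cons u fun _ => φ) := by
  have htelescope := (hB.curryLeft u).sum_apply_cons_sub_mixVec φ ψ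
  simp only [MultilinearMap.curryLeft_apply] at htelescope
  simp only [dirichletForm_apply, sum_neg_distrib, htelescope, neg_sub]

theorem convex_normalizedPotentials (hF : Convex ℝ F) :
    Convex ℝ (normalizedPotentials B F φref D) := by
  intro x hx y hy a b ha hb hab
  have hcomb : ∀ g : Fin (m + 1) → W, B (Fin.cons (φref - (a • x + b • y)) g) =
      a * B (Fin.cons (φref - x) g) + b * B (Fin.cons (φref - y) g) := fun g => by
    have hvec : φref - (a • x + b • y) = a • (φref - x) + b • (φref - y) := by
      rw [smul_sub, smul_sub, sub_add_sub_comm, ← add_smul, hab, one_smul]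
    simp only [hvec, B.cons_add, B.cons_smul, smul_eq_mul]
  refine ⟨hF hx.1 hy.1 ha hb hab, fun g hg => ?_, ?_⟩
  · rw [hcomb]
    exact add_nonneg (mul_nonneg ha (hx.2.1 g hg)) (mul_nonneg hb (hy.2.1 g hg))
  · rw [hcomb]
    exact (convex_Iic D) hx.2.2 hy.2.2 ha hb hab

theorem dirichletForm_sub_self_le (href : φref ∈ F) (hψ : ψ ∈ normalizedPotentials B F φref D)
    {g : Fin m → W} (hg : ∀ i, g i ∈ F) :
    dirichletForm B g (ψ - φref) (ψ - φref) ≤ B (Fin.cons (φref - ψ) (Fin.cons ψ g)) := by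
  have hpos : 0 ≤ B (Fin.cons (φref - ψ) (Fin.cons φref g)) :=
    hψ.2.1 _ (Fin.cases href hg)
  have hsplit : B (Fin.cons (φref - ψ) (Fin.cons (φref - ψ) g)) =
      B (Fin.cons (φref - ψ) (Fin.cons φref g)) - B (Fin.cons (φref - ψ) (Fin.cons ψ g)) :=
    apply_cons_sub (B.curryLeft (φref - ψ)) φref ψ g
  rw [← neg_sub φref ψ, map_neg, map_neg, LinearMap.neg_apply, neg_neg, dirichletForm_apply]
  linarith

namespace IsHodgeForm

theorem dirichletForm_self_nonneg (hB : IsHodgeForm B F) (hu : u ∈ vectorSpan ℝ F)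
    {g : Fin m → W} (hg : ∀ i, g i ∈ F) : 0 ≤ dirichletForm B g u u :=
  neg_nonneg.2 (hB.apply_self_nonpos u hu g hg)

theorem sq_dirichletForm_le (hB : IsHodgeForm B F) (hu : u ∈ vectorSpan ℝ F)
    (hv : v ∈ vectorSpan ℝ F) {g : Fin m → W} (hg : ∀ i, g i ∈ F) :
    dirichletForm B g u v ^ 2 ≤ dirichletForm B g u u * dirichletForm B g v v :=
  ((dirichletForm B g).restrict (vectorSpan ℝ F)).apply_sq_le_of_symm
    (fun x => hB.dirichletForm_self_nonneg x.2 hg)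
    ⟨fun x y => congrArg Neg.neg (hB.isSymm.apply_cons_cons_comm x.1 y.1 g)⟩ ⟨u, hu⟩ ⟨v, hv⟩

theorem dirichletForm_mixVec_le_aubinI (hB : IsHodgeForm B F) (hφ : φ ∈ F) (hψ : ψ ∈ F) {j : ℕ}
    (hj : j < m + 1) : dirichletForm B (mixVec φ ψ j) (φ - ψ) (φ - ψ) ≤ aubinI B φ ψ := by
  rw [aubinI, ← hB.isSymm.sum_dirichletForm_mixVec]
  exact single_le_sum (f := fun j => dirichletForm B (mixVec φ ψ j) (φ - ψ) (φ - ψ))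
    (fun i _ => hB.dirichletForm_self_nonneg (vsub_mem_vectorSpan ℝ hφ hψ) (mixVec_mem hφ hψ i))
    (mem_range.2 hj)

theorem aubinI_nonneg (hB : IsHodgeForm B F) (hφ : φ ∈ F) (hψ : ψ ∈ F) : 0 ≤ aubinI B φ ψ :=
  (hB.dirichletForm_self_nonneg (vsub_mem_vectorSpan ℝ hφ hψ) (mixVec_mem hφ hψ 0)).trans
    (hB.dirichletForm_mixVec_le_aubinI hφ hψ m.succ_pos)

theorem antitoneOn_apply_mixVec (hB : IsHodgeForm B F) (hφ : φ ∈ F) (hψ : ψ ∈ F) :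
    AntitoneOn (fun j => B (Fin.cons (φ - ψ) (mixVec φ ψ j))) (Set.Iic (m + 1)) := by
  refine antitoneOn_of_add_one_le Set.ordConnected_Iic fun j _ _ hj => ?_
  have hstep := (hB.isSymm.curryLeft (φ - ψ)).apply_cons_sub_mixVec φ ψ hj
  have hneg := hB.apply_self_nonpos (φ - ψ) (vsub_mem_vectorSpan ℝ hφ hψ)
    _ (mixVec_mem hφ hψ j)
  simp only [MultilinearMap.curryLeft_apply] at hstep
  linarith

theorem aubinI_le_mul_aubinJ (hB : IsHodgeForm B F) (hφ : φ ∈ F) (hψ : ψ ∈ F) :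
    aubinI B φ ψ ≤ ((m : ℝ) + 2) * aubinJ B ψ φ := by
  have hsum : ∑ j ∈ range (m + 1), B (Fin.cons (φ - ψ) (mixVec φ ψ j)) ≤
      ((m : ℝ) + 1) * B (Fin.cons (φ - ψ) fun _ => ψ) := by
    have hle := sum_le_card_nsmul (range (m + 1)) _ _ fun j hj => hB.antitoneOn_apply_mixVec hφ hψ
      (Nat.zero_le _) (Set.mem_Iic.2 (mem_range.1 hj).le) (Nat.zero_le j)
    simpa [mixVec_zero] using hle
  have hm : (m : ℝ) + 2 ≠ 0 := by positivity
  rw [aubinI, aubinJ, maEnergy, mul_sub, mul_inv_cancel_left₀ hm, sum_range_succ, mixVec_self]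
  linarith

theorem aubinJ_nonneg (hB : IsHodgeForm B F) (hφ : φ ∈ F) (hψ : ψ ∈ F) : 0 ≤ aubinJ B ψ φ :=
  nonneg_of_mul_nonneg_right ((hB.aubinI_nonneg hφ hψ).trans (hB.aubinI_le_mul_aubinJ hφ hψ))
    (by positivity)

theorem convexOn_aubinJ (hB : IsHodgeForm B F) (hF : Convex ℝ F) (φref : W) :
    ConvexOn ℝ F (aubinJ B φref) := by
  refine convexOn_of_exists_subgradient hF fun ψ hψ =>
    ⟨headLinear B (fun _ => φref) - headLinear B fun _ => ψ, fun φ hφ => ?_⟩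
  have hdiff := hB.isSymm.aubinJ_sub_aubinJ φref φ ψ
  have htangent : 0 ≤ B (Fin.cons (φ - ψ) fun _ => ψ) - maEnergy B φ ψ := hB.aubinJ_nonneg hφ hψ
  rw [LinearMap.sub_apply, headLinear_apply, headLinear_apply]
  linarith

theorem abs_apply_cons_sub_le (hB : IsHodgeForm B F) (hu : u ∈ vectorSpan ℝ F) (hφ : φ ∈ F)
    (hψ : ψ ∈ F) {A : ℝ} (hA : ∀ j, dirichletForm B (mixVec φ ψ j) u u ≤ A) :
    |B (Fin.cons u fun _ => φ) - B (Fin.cons u fun _ => ψ)| ≤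
      ((m : ℝ) + 1) * √(A * aubinI B φ ψ) := by
  have hsub : φ - ψ ∈ vectorSpan ℝ F := vsub_mem_vectorSpan ℝ hφ hψ
  have hterm : ∀ j ∈ range (m + 1),
      |dirichletForm B (mixVec φ ψ j) u (φ - ψ)| ≤ √(A * aubinI B φ ψ) := fun j hj => by
    have hmix : ∀ i : Fin m, mixVec φ ψ j i ∈ F := mixVec_mem hφ hψ j
    refine Real.abs_le_sqrt ((hB.sq_dirichletForm_le hu hsub hmix).trans ?_)
    exact mul_le_mul (hA j) (hB.dirichletForm_mixVec_le_aubinI hφ hψ (mem_range.1 hj))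
      (hB.dirichletForm_self_nonneg hsub hmix)
      ((hB.dirichletForm_self_nonneg hu hmix).trans (hA j))
  rw [abs_sub_comm, ← hB.isSymm.sum_dirichletForm_mixVec]
  calc |∑ j ∈ range (m + 1), dirichletForm B (mixVec φ ψ j) u (φ - ψ)|
      ≤ ∑ j ∈ range (m + 1), |dirichletForm B (mixVec φ ψ j) u (φ - ψ)| := abs_sum_le_sum_abs _ _
    _ ≤ ∑ _j ∈ range (m + 1), √(A * aubinI B φ ψ) := sum_le_sum hterm
    _ = ((m : ℝ) + 1) * √(A * aubinI B φ ψ) := by simp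

theorem apply_cons_sub_self_le (hB : IsHodgeForm B F) (href : φref ∈ F)
    (hφ : φ ∈ normalizedPotentials B F φref D) :
    B (Fin.cons (φref - φ) fun _ => φ) ≤ ((m : ℝ) + 2) * (D + aubinJ B φref φ) := by
  have hI := hB.aubinI_le_mul_aubinJ hφ.1 href
  have hD : 0 ≤ D := (hφ.2.1 _ fun _ => href).trans hφ.2.2
  have hmD : 0 ≤ ((m : ℝ) + 1) * D := by positivity
  calc B (Fin.cons (φref - φ) fun _ => φ)
      = aubinI B φ φref + B (Fin.cons (φref - φ) fun _ => φref) := by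
        simp only [aubinI, apply_cons_sub]
        ring
    _ ≤ ((m : ℝ) + 2) * (D + aubinJ B φref φ) := by linarith [hφ.2.2]

theorem apply_cons_sub_comp_le (hB : IsHodgeForm B F) (hF : Convex ℝ F) (href : φref ∈ F)
    {κ : Type*} [Fintype κ] {x : κ → W} (hx : ∀ k, x k ∈ normalizedPotentials B F φref D) {M : ℝ}
    (hM : ∀ k, aubinJ B φref (x k) ≤ M) (k : κ) (r : Fin (m + 1) → κ) :
    B (Fin.cons (φref - x k) (x ∘ r)) ≤
      (Fintype.card κ : ℝ) ^ (m + 2) * (((m : ℝ) + 2) * (D + M)) := by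
  have hcard : (0 : ℝ) < Fintype.card κ := by exact_mod_cast Fintype.card_pos_iff.2 ⟨k⟩
  set w : ℝ := (Fintype.card κ : ℝ)⁻¹ with hw
  have hw0 : 0 ≤ w := inv_nonneg.2 hcard.le
  have hw1 : ∑ _k : κ, w = 1 := by simp [hw, hcard.ne']
  set φ : W := ∑ k, w • x k with hφ
  have hφmem : φ ∈ normalizedPotentials B F φref D :=
    (convex_normalizedPotentials hF).sum_mem (fun _ _ => hw0) hw1 fun k _ => hx k
  have hJ : aubinJ B φref φ ≤ M :=
    (((hB.convexOn_aubinJ hF φref).convex_le M).sum_mem (fun _ _ => hw0) hw1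
      fun k _ => ⟨(hx k).1, hM k⟩).2
  let G : Fin (m + 2) → κ → W := Fin.cons (fun k => φref - x k) fun _ => x
  have hG : ∀ s : Fin (m + 2) → κ,
      (fun i => G i (s i)) = Fin.cons (φref - x (s 0)) fun i => x (s i.succ) := fun s => by
    funext i
    cases i using Fin.cases <;> rfl
  have hbary : (fun i => ∑ k, w • G i k) = Fin.cons (φref - φ) fun _ => φ := by
    funext i
    cases i using Fin.cases
    · simp only [G, Fin.cons_zero, smul_sub, sum_sub_distrib, ← sum_smul, hw1, one_smul, hφ]
    · rfl
  have hexp := prod_mul_apply_le_apply_sum_smul B (w := fun _ => w) (fun _ => hw0) (G := G)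
    (fun s => by rw [hG]; exact (hx (s 0)).2.1 _ fun i => (hx _).1) (Fin.cons k r)
  rw [hG, hbary, prod_const, card_univ, Fintype.card_fin, hw, inv_pow,
    inv_mul_le_iff₀ (pow_pos hcard _)] at hexp
  refine hexp.trans (mul_le_mul_of_nonneg_left ?_ (by positivity))
  exact (hB.apply_cons_sub_self_le href hφmem).trans (by gcongr)

end IsHodgeForm

theorem MA_measure_holder_general (hB : IsHodgeForm B F) (hF : Convex ℝ F)
    {φref ψ φ₁ φ₂ : W} {D : ℝ} (href : φref ∈ F) (hψ : ψ ∈ normalizedPotentials B F φref D)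
    (hφ₁ : φ₁ ∈ normalizedPotentials B F φref D) (hφ₂ : φ₂ ∈ normalizedPotentials B F φref D) :
    |B (Fin.cons (ψ - φref) fun _ => φ₁) - B (Fin.cons (ψ - φref) fun _ => φ₂)| ≤
      ((m : ℝ) + 1) * √(3 ^ (m + 2) * ((m : ℝ) + 2)) * √(aubinI B φ₁ φ₂) *
        √(D + max (aubinJ B φref ψ) (max (aubinJ B φref φ₁) (aubinJ B φref φ₂))) := by
  set M := max (aubinJ B φref ψ) (max (aubinJ B φref φ₁) (aubinJ B φref φ₂)) with hM
  let x : Fin 3 → W := ![ψ, φ₁, φ₂]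
  have hx : ∀ k, x k ∈ normalizedPotentials B F φref D := by
    simpa [x, Fin.forall_fin_succ] using ⟨hψ, hφ₁, hφ₂⟩
  have hJ : ∀ k, aubinJ B φref (x k) ≤ M := by
    simp [x, Fin.forall_fin_succ, hM]
  have hdirichlet : ∀ j, dirichletForm B (mixVec φ₁ φ₂ j) (ψ - φref) (ψ - φref) ≤
      3 ^ (m + 2) * (((m : ℝ) + 2) * (D + M)) := fun j => by
    have hmixed := hB.apply_cons_sub_comp_le hF href hx hJ 0 (Fin.cons 0 (mixVec 1 2 j))
    rw [Fin.comp_cons, comp_mixVec, Fintype.card_fin] at hmixed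
    exact (dirichletForm_sub_self_le href hψ (mixVec_mem hφ₁.1 hφ₂.1 j)).trans
      (mod_cast hmixed)
  calc |B (Fin.cons (ψ - φref) fun _ => φ₁) - B (Fin.cons (ψ - φref) fun _ => φ₂)|
      ≤ ((m : ℝ) + 1) * √(3 ^ (m + 2) * (((m : ℝ) + 2) * (D + M)) * aubinI B φ₁ φ₂) :=
        hB.abs_apply_cons_sub_le (vsub_mem_vectorSpan ℝ hψ.1 href) hφ₁.1 hφ₂.1 hdirichlet
    _ = ((m : ℝ) + 1) * √(3 ^ (m + 2) * ((m : ℝ) + 2)) * √(aubinI B φ₁ φ₂) * √(D + M) := by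
        rw [← mul_assoc, Real.sqrt_mul' _ (hB.aubinI_nonneg hφ₁.1 hφ₂.1),
          Real.sqrt_mul (by positivity)]
        ring

end Functionals

theorem MASetup.isHodgeForm {m : ℕ} {W : Type*} [AddCommGroup W] [Module ℝ W]
    (S : MASetup m W) : IsHodgeForm S.B S.F where
  isSymm := S.symm
  apply_self_nonpos u hu := by
    refine S.hodge u (Submodule.span_mono ?_ hu)
    rintro _ ⟨φ, hφ, ψ, hψ, rfl⟩
    exact Or.inl ⟨φ, hφ, ψ, hψ, rfl⟩

/-- there is `C > 0` depending only on `n = m + 1` such that for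
every setup, reference `φ_ref ∈ F`, positivity cone `W₊ ⊆ W₀` (on which `B` is
nonnegative against `F`-arguments), constant `D ≥ 0` bounding
`B(φ_ref - φ, φ_ref, …, φ_ref) ≤ D` for sup-normalized `φ ∈ F`, and all
sup-normalized `ψ, φ₁, φ₂ ∈ F`:
`|B(ψ-φ_ref, φ₁,…,φ₁) - B(ψ-φ_ref, φ₂,…,φ₂)| ≤
  C I(φ₁,φ₂)^{1/2} (D + max{J(ψ), J(φ₁), J(φ₂)})^{1/2}`. -/
theorem MA_measure_holder (m : ℕ) :
    ∃ C : ℝ, 0 < C ∧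
      ∀ (W : Type*) [AddCommGroup W] [Module ℝ W] (S : MASetup m W),
        ∀ φref ∈ S.F,
          ∀ Wp : ConvexCone ℝ W, (Wp : Set W) ⊆ (S.W0 : Set W) →
            (∀ u ∈ Wp, ∀ g : Fin (m + 1) → W, (∀ i, g i ∈ S.F) →
              0 ≤ S.B (Fin.cons u g)) →
          ∀ D : ℝ, 0 ≤ D →
            (∀ φ ∈ S.F, φref - φ ∈ Wp →
              S.B (Fin.cons (φref - φ) fun _ => φref) ≤ D) →
          ∀ ψ ∈ S.F, ∀ φ₁ ∈ S.F, ∀ φ₂ ∈ S.F,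
            φref - ψ ∈ Wp → φref - φ₁ ∈ Wp → φref - φ₂ ∈ Wp →
              |S.B (Fin.cons (ψ - φref) fun _ => φ₁) -
                  S.B (Fin.cons (ψ - φref) fun _ => φ₂)| ≤
                C * S.Ifun φ₁ φ₂ ^ ((1 : ℝ) / 2) *
                  (D + max (S.Jfun φref ψ)
                    (max (S.Jfun φref φ₁) (S.Jfun φref φ₂))) ^ ((1 : ℝ) / 2) := by
  refine ⟨((m : ℝ) + 1) * √(3 ^ (m + 2) * ((m : ℝ) + 2)), by positivity, ?_⟩
  intro W _ _ S φref href Wp _ hpos D _ hD ψ hψ φ₁ hφ₁ φ₂ hφ₂ hψp hφ₁p hφ₂p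
  have hmem : ∀ φ ∈ S.F, φref - φ ∈ Wp → φ ∈ normalizedPotentials S.B S.F φref D :=
    fun φ hφ hφp => ⟨hφ, hpos _ hφp, hD φ hφ hφp⟩
  rw [← Real.sqrt_eq_rpow, ← Real.sqrt_eq_rpow]
  exact MA_measure_holder_general S.isHodgeForm S.Fconv href (hmem ψ hψ hψp)
    (hmem φ₁ hφ₁ hφ₁p) (hmem φ₂ hφ₂ hφ₂p)
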